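/- Let 𝒮₀ be a nonempty decreasing subset of 𝒮 with 𝒮₀≠𝒮, and let 0<δ₁<δ₂. Then there exists N=N(δ₁,δ₂) such that for all n>N, P_{v₁}(T_{𝒮₀}(δ₁)>n) < P_{v₁}(T_{𝒮₀}(δ₂)>n). -/

import Mathlib

open scoped BigOperators Classical ENNReal
open Filter Topology

noncomputable section
namespace ORRW

/-- Probability measures on a finite type `A`, topologized as a subset of `ℝ^A`. -/
abbrev ProbMeas (A : Type) [Fintype A] : Type :=
  {p : A → ℝ // (∀ a, 0 ≤ p a) ∧ ∑ a, p a = 1}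

/-- Relative entropy `R(γ‖ρ)` between two finitely supported "rows", valued in `EReal`,
with `+∞` when absolute continuity fails. -/
def relEnt {A : Type} [Fintype A] (γ ρ : A → ℝ) : EReal :=
  if ∀ a, ρ a = 0 → γ a = 0 then ((∑ a, γ a * Real.log (γ a / ρ a) : ℝ) : EReal)
  else (⊤ : EReal)

/-- `∫ R(q‖p) dν = Σ_a ν(a) · R(q(a,·)‖p(a,·))`. -/
def relEntInt {A : Type} [Fintype A] (ν : A → ℝ) (q p : A → A → ℝ) : EReal :=
  ∑ a, (ν a : EReal) * relEnt (q a) (p a)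

/-- `ν` is an invariant measure of the kernel `q`. -/
def Invariant {A : Type} [Fintype A] (ν : A → ℝ) (q : A → A → ℝ) : Prop :=
  ∀ y, ∑ x, ν x * q x y = ν y

/-- Extended-real logarithm: `⊥` at nonpositive arguments. -/
def elog (x : ℝ) : EReal := if x ≤ 0 then (⊥ : EReal) else ((Real.log x : ℝ) : EReal)

/-- Empirical measure of a finite trajectory `f : Fin (n+1) → A`. -/
def empMeas {A : Type} [Fintype A] [DecidableEq A] (n : ℕ) (f : Fin (n + 1) → A) :
    ProbMeas A :=
  ⟨fun a => ((Finset.univ.filter (fun i => f i = a)).card : ℝ) / (n + 1),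
    fun a => by positivity, by
      have key : ∑ a : A, ((Finset.univ.filter (fun i => f i = a)).card) = n + 1 := by
        have h := Finset.card_eq_sum_card_fiberwise
          (s := (Finset.univ : Finset (Fin (n + 1)))) (t := (Finset.univ : Finset A))
          (f := f) (fun i _ => Finset.mem_univ (f i))
        simpa using h.symm
      have key' : ∑ a : A, (((Finset.univ.filter (fun i => f i = a)).card : ℝ)) = (n : ℝ) + 1 := by
        have h2 := congrArg (fun m : ℕ => (m : ℝ)) key
        push_cast at h2
        simpa using h2
      rw [← Finset.sum_div, key', div_self (by positivity)]⟩

section Graph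

variable {V : Type} [Fintype V] [DecidableEq V]

/-- Weight of an edge given the set `F` of already traversed edges. -/
def gw (δ : ℝ) (F : Finset (Sym2 V)) (e : Sym2 V) : ℝ := if e ∈ F then δ else 1

/-- The transition kernel `p̂_F` on `V`. -/
def phat (G : SimpleGraph V) [DecidableRel G.Adj] (δ : ℝ) (F : Finset (Sym2 V))
    (x y : V) : ℝ :=
  if G.Adj x y then gw δ F s(x, y) / ∑ z ∈ G.neighborFinset x, gw δ F s(x, z) else 0

/-- Two edges are adjacent iff they share a vertex. -/
def edgeAdj (e e' : Sym2 V) : Prop := ∃ v, v ∈ e ∧ v ∈ e'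

/-- `x` is a vertex of the edge set `F`. -/
def memVerts (F : Finset (Sym2 V)) (x : V) : Prop := ∃ e ∈ F, x ∈ e

/-- `𝒯_G`: stochastic matrices on `V` adapted to `G`. -/
def TG (G : SimpleGraph V) : Set (V → V → ℝ) :=
  {q | (∀ x y, 0 ≤ q x y) ∧ (∀ x, ∑ y, q x y = 1) ∧ ∀ x y, q x y ≠ 0 → G.Adj x y}

/-- `𝒯(F)`: stochastic kernels from the vertex set of `F` to `V`, supported on `F`. -/
def TE (F : Finset (Sym2 V)) : Set (V → V → ℝ) :=
  {q | (∀ x y, 0 ≤ q x y) ∧ (∀ x, memVerts F x → ∑ y, q x y = 1) ∧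
    ∀ x y, q x y ≠ 0 → s(x, y) ∈ F}

/-- `ℰ`: admissible increasing sequences of traversed edge sets. -/
def seqE (G : SimpleGraph V) [DecidableRel G.Adj] (v₁ : V) :
    Set (Fin G.edgeFinset.card → Finset (Sym2 V)) :=
  {Es | (∀ k, Es k ⊆ G.edgeFinset) ∧ (∀ k, (Es k).card = (k : ℕ) + 1) ∧
    (∀ k l : Fin G.edgeFinset.card, (k : ℕ) + 1 = (l : ℕ) → Es k ⊂ Es l) ∧
    (∀ k : Fin G.edgeFinset.card, (k : ℕ) = 0 → ∃ e ∈ Es k, v₁ ∈ e) ∧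
    (∀ k l : Fin G.edgeFinset.card, (k : ℕ) + 1 = (l : ℕ) →
      ∀ e ∈ Es l \ Es k, ∃ e' ∈ Es k, edgeAdj e e')}

/-- The rate function `I_δ`. -/
def Ifun (G : SimpleGraph V) [DecidableRel G.Adj] (v₁ : V) (δ : ℝ) (ν : ProbMeas V) : EReal :=
  sInf { c : EReal |
    ∃ (νs : Fin G.edgeFinset.card → ProbMeas V) (r : Fin G.edgeFinset.card → ℝ)
      (Es : Fin G.edgeFinset.card → Finset (Sym2 V))
      (qs : Fin G.edgeFinset.card → V → V → ℝ),
      Es ∈ seqE G v₁ ∧ (∀ k, 0 ≤ r k) ∧ (∑ k, r k = 1) ∧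
      (∀ k x, (νs k).1 x ≠ 0 → memVerts (Es k) x) ∧
      (∀ x, ∑ k, r k * (νs k).1 x = ν.1 x) ∧
      (∀ k, qs k ∈ TE (Es k)) ∧ (∀ k, Invariant (νs k).1 (qs k)) ∧
      c = ∑ k, ((r k : ℝ) : EReal) * relEntInt (νs k).1 (qs k) (phat G δ (Es k)) }

/-- Edges traversed along a path, given as a list of consecutively visited vertices. -/
def pathEdges : List V → Finset (Sym2 V)
  | [] => ∅
  | [_] => ∅
  | x :: y :: t => insert s(x, y) (pathEdges (y :: t))

/-- Product of one-step ORRW transition probabilities along a trajectory,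
the trajectory being listed in reverse chronological order. -/
def stepsProb (G : SimpleGraph V) [DecidableRel G.Adj] (δ : ℝ) : List V → ℝ
  | [] => 1
  | [_] => 1
  | y :: x :: t => phat G δ (pathEdges (x :: t).reverse) x y * stepsProb G δ (x :: t)

/-- The law of `(X_0, …, X_n)` for the `δ`-ORRW started at `v₁`. -/
def trajProb (G : SimpleGraph V) [DecidableRel G.Adj] (δ : ℝ) (v₁ : V) (n : ℕ)
    (f : Fin (n + 1) → V) : ℝ :=
  if f 0 = v₁ then stepsProb G δ (List.ofFn f).reverse else 0

/-- `P_{v₁}(L_{n+1} ∈ C)`: the probability that the empirical measure of the first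
`n+1` positions of the `δ`-ORRW lies in `C`. -/
def probEmp (G : SimpleGraph V) [DecidableRel G.Adj] (δ : ℝ) (v₁ : V) (n : ℕ)
    (C : Set (ProbMeas V)) : ℝ :=
  ∑ f : Fin (n + 1) → V, if empMeas n f ∈ C then trajProb G δ v₁ n f else 0

/-- The family `𝒮` of edge sets of connected subgraphs having an edge at `v₁`. -/
def scrS (G : SimpleGraph V) [DecidableRel G.Adj] (v₁ : V) : Set (Finset (Sym2 V)) :=
  {F | F ⊆ G.edgeFinset ∧ (∃ e ∈ F, v₁ ∈ e) ∧
    ∀ x y : V, memVerts F x → memVerts F y →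
      (SimpleGraph.fromEdgeSet (↑F : Set (Sym2 V))).Reachable x y}

/-- `𝒮₀` is a decreasing subset of `𝒮`. -/
def DecreasingIn (G : SimpleGraph V) [DecidableRel G.Adj] (v₁ : V)
    (S0 : Set (Finset (Sym2 V))) : Prop :=
  ∀ F₁ F₂, F₁ ∈ scrS G v₁ → F₂ ∈ scrS G v₁ → F₁ ⊆ F₂ → F₂ ∈ S0 → F₁ ∈ S0

/-- `P_{v₁}(T_{𝒮₀} > n)`. -/
def probTgt (G : SimpleGraph V) [DecidableRel G.Adj] (δ : ℝ) (v₁ : V)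
    (S0 : Set (Finset (Sym2 V))) (n : ℕ) : ℝ :=
  ∑ f : Fin (n + 1) → V,
    if ∀ k, 1 ≤ k → k ≤ n → pathEdges ((List.ofFn f).take (k + 1)) ∈ S0 then
      trajProb G δ v₁ n f
    else 0

/-- `P_{v₁}(C_E > n)` for the edge cover time `C_E`. -/
def probCgt (G : SimpleGraph V) [DecidableRel G.Adj] (δ : ℝ) (v₁ : V) (n : ℕ) : ℝ :=
  ∑ f : Fin (n + 1) → V,
    if ¬ G.edgeFinset ⊆ pathEdges (List.ofFn f) then trajProb G δ v₁ n f else 0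

/-- `E_{v₁}[exp (α T_{𝒮₀})]`, valued in `ℝ≥0∞`; the stopping time takes values in
`{1, 2, …} ∪ {∞}`. -/
def expT (G : SimpleGraph V) [DecidableRel G.Adj] (δ : ℝ) (v₁ : V)
    (S0 : Set (Finset (Sym2 V))) (α : ℝ) : ℝ≥0∞ :=
  (∑' n : ℕ, ENNReal.ofReal
      (Real.exp (α * (n + 1)) * (probTgt G δ v₁ S0 n - probTgt G δ v₁ S0 (n + 1)))) +
    (if 0 < α then (⊤ : ℝ≥0∞) else if α = 0 then 1 else 0) *
      ENNReal.ofReal (⨅ n : ℕ, probTgt G δ v₁ S0 n)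

/-- `E_{v₁}[exp (α C_E)]`, valued in `ℝ≥0∞`. -/
def expC (G : SimpleGraph V) [DecidableRel G.Adj] (δ : ℝ) (v₁ : V) (α : ℝ) : ℝ≥0∞ :=
  (∑' n : ℕ, ENNReal.ofReal
      (Real.exp (α * (n + 1)) * (probCgt G δ v₁ n - probCgt G δ v₁ (n + 1)))) +
    (if 0 < α then (⊤ : ℝ≥0∞) else if α = 0 then 1 else 0) *
      ENNReal.ofReal (⨅ n : ℕ, probCgt G δ v₁ n)

/-- The critical exponent `α_c(δ)` attached to a family `𝒮₀` of edge sets. -/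
def alphaC (G : SimpleGraph V) [DecidableRel G.Adj] (δ : ℝ)
    (S0 : Set (Finset (Sym2 V))) : EReal :=
  sInf { c : EReal | ∃ (ν : ProbMeas V) (F : Finset (Sym2 V)) (q : V → V → ℝ),
    F ∈ S0 ∧ q ∈ TE F ∧ (∀ x, ν.1 x ≠ 0 → memVerts F x) ∧ Invariant ν.1 q ∧
    c = relEntInt ν.1 q (phat G δ F) }

/-- `α_c^1(δ)`: the critical exponent for the cover time. -/
def alphaC1 (G : SimpleGraph V) [DecidableRel G.Adj] (v₁ : V) (δ : ℝ) : EReal :=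
  alphaC G δ (scrS G v₁ \ {G.edgeFinset})

end Graph

section Lifted

variable {V : Type} [Fintype V] [LinearOrder V]

/-- Smaller endpoint of an unordered pair. -/
def sym2lo (e : Sym2 V) : V := Sym2.lift ⟨fun a b => min a b, fun a b => min_comm a b⟩ e

/-- Larger endpoint of an unordered pair. -/
def sym2hi (e : Sym2 V) : V := Sym2.lift ⟨fun a b => max a b, fun a b => max_comm a b⟩ e

/-- `V_S = E × {-1, 1}`: vertex set of the lifted directed graph `S`
(`true` plays the role of `+1`). -/
abbrev VSet (G : SimpleGraph V) [DecidableRel G.Adj] : Type :=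
  {e : Sym2 V // e ∈ G.edgeFinset} × Bool

/-- Tail `z⁻` of an oriented edge. -/
def zm (G : SimpleGraph V) [DecidableRel G.Adj] (z : VSet G) : V :=
  if z.2 then sym2lo z.1.1 else sym2hi z.1.1

/-- Head `z⁺` of an oriented edge. -/
def zp (G : SimpleGraph V) [DecidableRel G.Adj] (z : VSet G) : V :=
  if z.2 then sym2hi z.1.1 else sym2lo z.1.1

/-- The kernel `p_F` on the lifted directed graph `S`. -/
def pS (G : SimpleGraph V) [DecidableRel G.Adj] (δ : ℝ) (F : Finset (Sym2 V))
    (z₁ z₂ : VSet G) : ℝ :=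
  if zp G z₁ = zm G z₂ then
    gw δ F z₂.1.1 / ∑ w : VSet G, (if zp G z₁ = zm G w then gw δ F w.1.1 else 0)
  else 0

/-- `𝒯_S`: stochastic matrices on `V_S` moving along orientations. -/
def TS (G : SimpleGraph V) [DecidableRel G.Adj] : Set (VSet G → VSet G → ℝ) :=
  {q | (∀ z w, 0 ≤ q z w) ∧ (∀ z, ∑ w, q z w = 1) ∧ ∀ z w, q z w ≠ 0 → zp G z = zm G w}

/-- `𝒞(𝒮₀)`: probability measures on `V_S` whose first marginal is supported in
some member of `𝒮₀`. -/
def CC (G : SimpleGraph V) [DecidableRel G.Adj] (S0 : Set (Finset (Sym2 V))) :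
    Set (ProbMeas (VSet G)) :=
  {μ | ∃ F ∈ S0, ∀ z : VSet G, μ.1 z ≠ 0 → z.1.1 ∈ F}

/-- `Λ_{δ,𝒮₀}`. -/
def Lam (G : SimpleGraph V) [DecidableRel G.Adj] (v₁ : V) (δ : ℝ)
    (S0 : Set (Finset (Sym2 V))) (μ : ProbMeas (VSet G)) : EReal :=
  sInf { c : EReal |
    ∃ (μs : Fin G.edgeFinset.card → ProbMeas (VSet G)) (r : Fin G.edgeFinset.card → ℝ)
      (Es : Fin G.edgeFinset.card → Finset (Sym2 V))
      (qs : Fin G.edgeFinset.card → VSet G → VSet G → ℝ),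
      Es ∈ seqE G v₁ ∧ (∀ k, 0 ≤ r k) ∧ (∀ k, Es k ∉ S0 → r k = 0) ∧ (∑ k, r k = 1) ∧
      (∀ k z, (μs k).1 z ≠ 0 → z.1.1 ∈ Es k) ∧
      (∀ z, ∑ k, r k * (μs k).1 z = μ.1 z) ∧
      (∀ k, qs k ∈ TS G) ∧ (∀ k, Invariant (μs k).1 (qs k)) ∧
      c = ∑ k, ((r k : ℝ) : EReal) * relEntInt (μs k).1 (qs k) (pS G δ (Es k)) }

/-- `Λ^z_{δ,𝒮₀}`. -/
def LamZ (G : SimpleGraph V) [DecidableRel G.Adj] (v₁ : V) (δ : ℝ)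
    (S0 : Set (Finset (Sym2 V))) (z : VSet G) (μ : ProbMeas (VSet G)) : EReal :=
  sInf { c : EReal |
    ∃ (μs : Fin G.edgeFinset.card → ProbMeas (VSet G)) (r : Fin G.edgeFinset.card → ℝ)
      (Es : Fin G.edgeFinset.card → Finset (Sym2 V))
      (qs : Fin G.edgeFinset.card → VSet G → VSet G → ℝ),
      Es ∈ seqE G v₁ ∧ (∀ k : Fin G.edgeFinset.card, (k : ℕ) = 0 → Es k = {z.1.1}) ∧
      (∀ k, 0 ≤ r k) ∧ (∀ k, Es k ∉ S0 → r k = 0) ∧ (∑ k, r k = 1) ∧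
      (∀ k w, (μs k).1 w ≠ 0 → w.1.1 ∈ Es k) ∧
      (∀ w, ∑ k, r k * (μs k).1 w = μ.1 w) ∧
      (∀ k, qs k ∈ TS G) ∧ (∀ k, Invariant (μs k).1 (qs k)) ∧
      c = ∑ k, ((r k : ℝ) : EReal) * relEntInt (μs k).1 (qs k) (pS G δ (Es k)) }

/-- `Λ₁`: the Donsker–Varadhan functional for the simple random walk on `S`
(whose kernel is `pS` with `δ = 1`). -/
def Lam1 (G : SimpleGraph V) [DecidableRel G.Adj] (μ : ProbMeas (VSet G)) : EReal :=
  sInf { c : EReal | ∃ q ∈ TS G, Invariant μ.1 q ∧ c = relEntInt μ.1 q (pS G 1 ∅) }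

/-- Boundary `∂F` of an edge set: edges of `F` adjacent to some edge outside `F`. -/
def bdry (G : SimpleGraph V) [DecidableRel G.Adj] (F : Finset (Sym2 V)) : Finset (Sym2 V) :=
  F.filter fun e => ∃ e' ∈ G.edgeFinset \ F, edgeAdj e e'

/-- Out-degree `d(z)` of `z` in `S`. -/
def outDeg (G : SimpleGraph V) [DecidableRel G.Adj] (z : VSet G) : ℕ :=
  (Finset.univ.filter (fun w : VSet G => zp G z = zm G w)).card

/-- Number `k(z)` of out-neighbours of `z` lying in `F × {-1, 1}`. -/
def outDegIn (G : SimpleGraph V) [DecidableRel G.Adj] (F : Finset (Sym2 V))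
    (z : VSet G) : ℕ :=
  (Finset.univ.filter (fun w : VSet G => zp G z = zm G w ∧ w.1.1 ∈ F)).card

/-- The law of `(Z_0, …, Z_n)` for the lifted `δ`-ORRW conditioned on `Z_0 = z`. -/
def liftTraj (G : SimpleGraph V) [DecidableRel G.Adj] (δ : ℝ) (z : VSet G) (n : ℕ)
    (g : Fin (n + 1) → VSet G) : ℝ :=
  if g 0 = z then
    ∏ i : Fin n,
      pS G δ ((Finset.Iic i.castSucc).image (fun j => (g j).1.1))
        (g i.castSucc) (g i.succ)
  else 0

/-- The restricted logarithmic Laplace functional `W^{n+1}_{𝒮₀}(z)`. -/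
def Wres (G : SimpleGraph V) [DecidableRel G.Adj] (δ : ℝ) (z : VSet G)
    (S0 : Set (Finset (Sym2 V))) (h : ProbMeas (VSet G) → ℝ) (n : ℕ) : EReal :=
  if 0 < ∑ g : Fin (n + 1) → VSet G,
      (if empMeas n g ∈ CC G S0 then liftTraj G δ z n g else 0) then
    ((-((((n : ℝ) + 1))⁻¹ * Real.log (∑ g : Fin (n + 1) → VSet G,
      if empMeas n g ∈ CC G S0 then
        Real.exp (-((n : ℝ) + 1) * h (empMeas n g)) * liftTraj G δ z n g
      else 0)) : ℝ) : EReal)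
  else (⊤ : EReal)

end Lifted

/-!
Kill the walk when its set of traversed edges leaves `𝒮₀`, and let `P`, `Q` be the resulting
substochastic transition matrices on pairs (position, traversed edges) for `δ₁` and `δ₂`.
Crossing an already traversed edge is at least as likely under `Q` as under `P`, and crossing a
fresh edge is less likely by a factor of at most `δ₂ / δ₁`. Since the number of traversed edges
is bounded, the weight `κ = (δ₂ / δ₁) ^ #edges` absorbs the second effect: `P ≤ D⁻¹ Q D` entrywise
with `D = diag κ`.

A surviving edge set `F` is not all of `E`, so some vertex of `F` has an untraversed edge, and there
the reinforced steps are strictly likelier under `Q`. As `F` is connected, every surviving state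
lies on a loop through such a step, so for some `m` the `m`-step return probability under `Q`
exceeds the one under `P` by some `c > 0`. Spending `m` steps on this surplus of loops costs nothing
because `n ↦ Pⁿ 1` is nonincreasing, so `Qⁿ κ` gains a factor `1 + c` over `Pⁿ 1` again and again.
Hence the ratio of the two tails tends to infinity.
-/

section WeightedDomination

open Matrix

variable {ι : Type*} {κ : ι → ℝ} {P P' Q Q' : Matrix ι ι ℝ}

/-- `P` is dominated by `Q` up to the weight `κ`: entrywise `P ≤ D⁻¹ Q D` with `D = diag κ`,
written without inverses. -/
def WeightedLE (κ : ι → ℝ) (P Q : Matrix ι ι ℝ) : Prop :=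
  ∀ i j, κ i * P i j ≤ Q i j * κ j

theorem WeightedLE.mul_term_le (h : WeightedLE κ P Q) (h' : WeightedLE κ P' Q')
    (hP' : ∀ i j, 0 ≤ P' i j) (hQ : ∀ i j, 0 ≤ Q i j) (i j k : ι) :
    κ i * (P i j * P' j k) ≤ Q i j * Q' j k * κ k :=
  calc κ i * (P i j * P' j k) = κ i * P i j * P' j k := by ring
    _ ≤ Q i j * κ j * P' j k := mul_le_mul_of_nonneg_right (h i j) (hP' j k)
    _ = Q i j * (κ j * P' j k) := by ring
    _ ≤ Q i j * (Q' j k * κ k) := mul_le_mul_of_nonneg_left (h' j k) (hQ i j)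
    _ = Q i j * Q' j k * κ k := by ring

variable [Fintype ι]

theorem WeightedLE.mul (h : WeightedLE κ P Q) (h' : WeightedLE κ P' Q')
    (hP' : ∀ i j, 0 ≤ P' i j) (hQ : ∀ i j, 0 ≤ Q i j) : WeightedLE κ (P * P') (Q * Q') := by
  intro i k
  rw [mul_apply, mul_apply, Finset.mul_sum, Finset.sum_mul]
  exact Finset.sum_le_sum fun j _ => h.mul_term_le h' hP' hQ i j k

theorem WeightedLE.mul_lt_of_term_lt (h : WeightedLE κ P Q) (h' : WeightedLE κ P' Q')
    (hP' : ∀ i j, 0 ≤ P' i j) (hQ : ∀ i j, 0 ≤ Q i j) {i j k : ι}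
    (hlt : κ i * (P i j * P' j k) < Q i j * Q' j k * κ k) :
    κ i * (P * P') i k < (Q * Q') i k * κ k := by
  rw [mul_apply, mul_apply, Finset.mul_sum, Finset.sum_mul]
  exact Finset.sum_lt_sum (fun l _ => h.mul_term_le h' hP' hQ i l k) ⟨j, Finset.mem_univ j, hlt⟩

theorem WeightedLE.mul_lt_of_lt_of_pos (h : WeightedLE κ P Q) (h' : WeightedLE κ P' Q')
    (hP' : ∀ i j, 0 ≤ P' i j) (hQ : ∀ i j, 0 ≤ Q i j) {i j k : ι}
    (hij : κ i * P i j < Q i j * κ j) (hjk : 0 < P' j k) :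
    κ i * (P * P') i k < (Q * Q') i k * κ k := by
  refine h.mul_lt_of_term_lt h' hP' hQ (j := j) ?_
  calc κ i * (P i j * P' j k) = κ i * P i j * P' j k := by ring
    _ < Q i j * κ j * P' j k := mul_lt_mul_of_pos_right hij hjk
    _ = Q i j * (κ j * P' j k) := by ring
    _ ≤ Q i j * (Q' j k * κ k) := mul_le_mul_of_nonneg_left (h' j k) (hQ i j)
    _ = Q i j * Q' j k * κ k := by ring

theorem WeightedLE.mul_lt_of_pos_of_lt (h : WeightedLE κ P Q) (h' : WeightedLE κ P' Q')
    (hκ : ∀ i, 0 < κ i) (hP' : ∀ i j, 0 ≤ P' i j) (hQ : ∀ i j, 0 ≤ Q i j) {i j k : ι}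
    (hij : 0 < P i j) (hjk : κ j * P' j k < Q' j k * κ k) :
    κ i * (P * P') i k < (Q * Q') i k * κ k := by
  have hQij : 0 < Q i j :=
    pos_of_mul_pos_left ((mul_pos (hκ i) hij).trans_le (h i j)) (hκ j).le
  refine h.mul_lt_of_term_lt h' hP' hQ (j := j) ?_
  calc κ i * (P i j * P' j k) = κ i * P i j * P' j k := by ring
    _ ≤ Q i j * κ j * P' j k := mul_le_mul_of_nonneg_right (h i j) (hP' j k)
    _ = Q i j * (κ j * P' j k) := by ring
    _ < Q i j * (Q' j k * κ k) := mul_lt_mul_of_pos_left hjk hQij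
    _ = Q i j * Q' j k * κ k := by ring

theorem mul_dotProduct_le_dotProduct {a ρ : ℝ} {μ ν u v : ι → ℝ} (hρ : 0 ≤ ρ) (hν : 0 ≤ ν)
    (hu : 0 ≤ u) (hv : 0 ≤ v) (hμν : ∀ j, a * μ j ≤ ν j * κ j)
    (huv : ∀ j, μ j ≠ 0 → ρ * (κ j * u j) ≤ v j) :
    ρ * (a * (μ ⬝ᵥ u)) ≤ ν ⬝ᵥ v := by
  simp only [dotProduct, Finset.mul_sum]
  refine Finset.sum_le_sum fun j _ => ?_
  by_cases hμ : μ j = 0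
  · simpa [hμ] using mul_nonneg (hν j) (hv j)
  calc ρ * (a * (μ j * u j)) = a * μ j * (ρ * u j) := by ring
    _ ≤ ν j * κ j * (ρ * u j) := mul_le_mul_of_nonneg_right (hμν j) (mul_nonneg hρ (hu j))
    _ = ν j * (ρ * (κ j * u j)) := by ring
    _ ≤ ν j * v j := mul_le_mul_of_nonneg_left (huv j hμ) (hν j)

section Powers

variable [DecidableEq ι]

theorem WeightedLE.pow (h : WeightedLE κ P Q) (hP : ∀ i j, 0 ≤ P i j) (hQ : ∀ i j, 0 ≤ Q i j)
    (n : ℕ) : WeightedLE κ (P ^ n) (Q ^ n) := by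
  induction n with
  | zero =>
    intro i j
    rcases eq_or_ne i j with rfl | hij
    · simp
    · simp [hij]
  | succ n ih =>
    rw [pow_succ, pow_succ]
    exact ih.mul h hP (pow_apply_nonneg hQ n)

theorem WeightedLE.exists_pow_lt_of_reflTransGen (h : WeightedLE κ P Q) (hκ : ∀ i, 0 < κ i)
    (hP : ∀ i j, 0 ≤ P i j) (hQ : ∀ i j, 0 ≤ Q i j) {i j k l : ι}
    (hij : Relation.ReflTransGen (fun a b => 0 < P a b) i j)
    (hjk : κ j * P j k < Q j k * κ k)
    (hkl : Relation.ReflTransGen (fun a b => 0 < P a b) k l) :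
    ∃ m, κ i * (P ^ m) i l < (Q ^ m) i l * κ l := by
  have extend_right : ∃ m, κ j * (P ^ m) j l < (Q ^ m) j l * κ l := by
    induction hkl with
    | refl => exact ⟨1, by simpa using hjk⟩
    | tail _ hbc ih =>
      obtain ⟨m, hm⟩ := ih
      refine ⟨m + 1, ?_⟩
      rw [pow_succ, pow_succ]
      exact (h.pow hP hQ m).mul_lt_of_lt_of_pos h hP (pow_apply_nonneg hQ m) hm hbc
  induction hij using Relation.ReflTransGen.head_induction_on with
  | refl => exact extend_right
  | head hab _ ih =>
    obtain ⟨m, hm⟩ := ih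
    refine ⟨m + 1, ?_⟩
    rw [pow_succ', pow_succ']
    exact h.mul_lt_of_pos_of_lt (h.pow hP hQ m) hκ (pow_apply_nonneg hP m) hQ hab hm

theorem pow_mulVec_nonneg (hP : ∀ i j, 0 ≤ P i j) {u : ι → ℝ} (hu : 0 ≤ u) (n : ℕ) :
    0 ≤ P ^ n *ᵥ u :=
  fun i => dotProduct_nonneg_of_nonneg (pow_apply_nonneg hP n i) hu

theorem pow_add_mulVec (P : Matrix ι ι ℝ) (m n : ℕ) (u : ι → ℝ) :
    P ^ (m + n) *ᵥ u = P ^ m *ᵥ (P ^ n *ᵥ u) := by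
  rw [pow_add, mulVec_mulVec]

theorem pow_mulVec_mono (hP : ∀ i j, 0 ≤ P i j) (n : ℕ) {u v : ι → ℝ} (huv : u ≤ v) :
    P ^ n *ᵥ u ≤ P ^ n *ᵥ v :=
  fun i => dotProduct_le_dotProduct_of_nonneg_left huv (pow_apply_nonneg hP n i)

theorem antitone_pow_mulVec_one (hP : ∀ i j, 0 ≤ P i j) (hP1 : P *ᵥ 1 ≤ 1) :
    Antitone fun n => P ^ n *ᵥ (1 : ι → ℝ) := by
  refine antitone_nat_of_succ_le fun n => ?_
  rw [pow_add_mulVec, pow_one]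
  exact pow_mulVec_mono hP n hP1

theorem pow_mulVec_one_pos (hP : ∀ i j, 0 ≤ P i j) {L : Set ι}
    (hL : ∀ i ∈ L, ∃ j ∈ L, 0 < P i j) (n : ℕ) : ∀ i ∈ L, 0 < (P ^ n *ᵥ 1) i := by
  induction n with
  | zero => simp
  | succ n ih =>
    intro i hi
    obtain ⟨j, hj, hij⟩ := hL i hi
    rw [add_comm, pow_add_mulVec, pow_one]
    exact Finset.sum_pos'
      (fun k _ => mul_nonneg (hP i k) (pow_mulVec_nonneg hP zero_le_one n k))
      ⟨j, Finset.mem_univ j, mul_pos hij (ih j hj)⟩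

theorem mem_of_pow_apply_ne_zero {L : Set ι} (hL : ∀ i j, P i j ≠ 0 → j ∈ L) (n : ℕ) {i j : ι}
    (hi : i ∈ L) (hij : (P ^ n) i j ≠ 0) : j ∈ L := by
  cases n with
  | zero =>
    rw [pow_zero] at hij
    exact of_not_not fun hj => hij (one_apply_ne fun hij' => hj (hij' ▸ hi))
  | succ n =>
    rw [pow_succ, mul_apply] at hij
    obtain ⟨k, -, hk⟩ := Finset.exists_ne_zero_of_sum_ne_zero hij
    exact hL k j (right_ne_zero_of_mul hk)

theorem WeightedLE.mul_one_add_mul_pow_mulVec_le (h : WeightedLE κ P Q) (hκ : ∀ i, 0 < κ i)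
    (hP : ∀ i j, 0 ≤ P i j) (hQ : ∀ i j, 0 ≤ Q i j) (hP1 : P *ᵥ 1 ≤ 1) {L : Set ι}
    (hL : ∀ i j, P i j ≠ 0 → j ∈ L) {i : ι} (hi : i ∈ L) {m : ℕ} {c : ℝ} (hc : 0 ≤ c)
    (hgain : (P ^ m) i i + c ≤ (Q ^ m) i i) {ρ : ℝ} (hρ : 0 ≤ ρ) {n : ℕ}
    (hn : ∀ j ∈ L, ρ * (κ j * (P ^ n *ᵥ 1) j) ≤ (Q ^ n *ᵥ κ) j) :
    ρ * (1 + c) * (κ i * (P ^ (m + n) *ᵥ 1) i) ≤ (Q ^ (m + n) *ᵥ κ) i := by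
  have hdecr : (P ^ (m + n) *ᵥ 1) i ≤ (P ^ n *ᵥ 1) i :=
    antitone_pow_mulVec_one hP hP1 (Nat.le_add_left n m) i
  have hrow : ∀ j, κ i * ((P ^ m) i + Pi.single i c : ι → ℝ) j ≤ (Q ^ m) i j * κ j := by
    intro j
    rcases eq_or_ne j i with rfl | hji
    · rw [mul_comm ((Q ^ m) j j)]
      simpa using mul_le_mul_of_nonneg_left hgain (hκ j).le
    · simpa [hji] using h.pow hP hQ m i j
  have hsupp : ∀ j, ((P ^ m) i + Pi.single i c : ι → ℝ) j ≠ 0 → j ∈ L := by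
    intro j hj
    rcases eq_or_ne j i with rfl | hji
    · exact hi
    · exact mem_of_pow_apply_ne_zero hL m hi (by simpa [hji] using hj)
  calc ρ * (1 + c) * (κ i * (P ^ (m + n) *ᵥ 1) i)
      = ρ * (κ i * ((P ^ (m + n) *ᵥ 1) i + c * (P ^ (m + n) *ᵥ 1) i)) := by ring
    _ ≤ ρ * (κ i * ((P ^ (m + n) *ᵥ 1) i + c * (P ^ n *ᵥ 1) i)) := by
      have := (hκ i).le
      gcongr
    _ = ρ * (κ i * (((P ^ m) i + Pi.single i c) ⬝ᵥ (P ^ n *ᵥ 1))) := by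
      rw [add_dotProduct, single_dotProduct, pow_add_mulVec]
      rfl
    _ ≤ (Q ^ m) i ⬝ᵥ (Q ^ n *ᵥ κ) :=
      mul_dotProduct_le_dotProduct hρ (pow_apply_nonneg hQ m i)
        (pow_mulVec_nonneg hP zero_le_one n) (pow_mulVec_nonneg hQ (fun j => (hκ j).le) n)
        hrow fun j hj => hn j (hsupp j hj)
    _ = (Q ^ (m + n) *ᵥ κ) i := by rw [pow_add_mulVec]; rfl

theorem WeightedLE.eventually_pow_mul_pow_mulVec_le (h : WeightedLE κ P Q) (hκ : ∀ i, 0 < κ i)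
    (hP : ∀ i j, 0 ≤ P i j) (hQ : ∀ i j, 0 ≤ Q i j) (hP1 : P *ᵥ 1 ≤ 1) {L : Set ι}
    (hL : ∀ i j, P i j ≠ 0 → j ∈ L) {c : ℝ} (hc : 0 ≤ c)
    (hgain : ∀ i ∈ L, ∃ m, (P ^ m) i i + c ≤ (Q ^ m) i i) (k : ℕ) :
    ∀ᶠ n in atTop, ∀ i ∈ L, (1 + c) ^ k * (κ i * (P ^ n *ᵥ 1) i) ≤ (Q ^ n *ᵥ κ) i := by
  induction k with
  | zero =>
    refine Eventually.of_forall fun n i _ => ?_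
    have hle : 1 * (κ i * ((P ^ n) i ⬝ᵥ 1)) ≤ (Q ^ n) i ⬝ᵥ κ :=
      mul_dotProduct_le_dotProduct zero_le_one (pow_apply_nonneg hQ n i) zero_le_one
        (fun j => (hκ j).le) (h.pow hP hQ n i) (fun j _ => by simp)
    rw [pow_zero]
    exact hle
  | succ k ih =>
    refine eventually_all.2 fun i => eventually_imp_distrib_left.2 fun hi => ?_
    obtain ⟨m, hm⟩ := hgain i hi
    obtain ⟨N, hN⟩ := eventually_atTop.1 ih
    filter_upwards [eventually_ge_atTop (m + N)] with n hn
    obtain ⟨r, rfl⟩ := Nat.exists_eq_add_of_le (show m ≤ n by lia)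
    rw [pow_succ]
    exact h.mul_one_add_mul_pow_mulVec_le hκ hP hQ hP1 hL hi hc hm (by positivity)
      (hN r (by lia))

theorem exists_pos_forall_mem_exists_pow_add_le {L : Set ι}
    (hgain : ∀ i ∈ L, ∃ m, (P ^ m) i i < (Q ^ m) i i) :
    ∃ c > 0, ∀ i ∈ L, ∃ m, (P ^ m) i i + c ≤ (Q ^ m) i i := by
  choose m hm using fun i : L => hgain i i.2
  obtain ⟨c, hc, hlt⟩ := Pi.exists_forall_pos_add_lt hm
  exact ⟨c, hc, fun i hi => ⟨m ⟨i, hi⟩, (hlt ⟨i, hi⟩).le⟩⟩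

theorem WeightedLE.eventually_mul_pow_mulVec_le (h : WeightedLE κ P Q) (hκ : ∀ i, 0 < κ i)
    (hP : ∀ i j, 0 ≤ P i j) (hQ : ∀ i j, 0 ≤ Q i j) (hP1 : P *ᵥ 1 ≤ 1) {L : Set ι}
    (hL : ∀ i j, P i j ≠ 0 → j ∈ L) (hgain : ∀ i ∈ L, ∃ m, (P ^ m) i i < (Q ^ m) i i)
    (C : ℝ) (i : ι) :
    ∀ᶠ n in atTop, C * (P ^ n *ᵥ 1) i ≤ (Q ^ n *ᵥ κ) i := by
  obtain ⟨c, hc, hgain⟩ := exists_pos_forall_mem_exists_pow_add_le hgain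
  obtain ⟨k, hk⟩ := pow_unbounded_of_one_lt (C / κ i) (lt_add_of_pos_right 1 hc)
  obtain ⟨N, hN⟩ :=
    eventually_atTop.1 (h.eventually_pow_mul_pow_mulVec_le hκ hP hQ hP1 hL hc.le hgain k)
  filter_upwards [eventually_ge_atTop (1 + N)] with n hn
  obtain ⟨r, rfl⟩ := Nat.exists_eq_add_of_le (show 1 ≤ n by lia)
  calc C * (P ^ (1 + r) *ᵥ 1) i
      ≤ (1 + c) ^ k * κ i * (P ^ (1 + r) *ᵥ 1) i :=
        mul_le_mul_of_nonneg_right ((div_lt_iff₀ (hκ i)).1 hk).le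
          (pow_mulVec_nonneg hP zero_le_one _ i)
    _ = (1 + c) ^ k * (κ i * (P i ⬝ᵥ (P ^ r *ᵥ 1))) := by
      rw [mul_assoc, pow_add_mulVec, pow_one]
      rfl
    _ ≤ Q i ⬝ᵥ (Q ^ r *ᵥ κ) :=
      mul_dotProduct_le_dotProduct (by positivity) (hQ i) (pow_mulVec_nonneg hP zero_le_one r)
        (pow_mulVec_nonneg hQ (fun j => (hκ j).le) r) (h i)
        fun j hj => hN r (by lia) j (hL i j hj)
    _ = (Q ^ (1 + r) *ᵥ κ) i := by
      rw [pow_add_mulVec, pow_one]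
      rfl

theorem WeightedLE.eventually_mul_pow_mulVec_one_le (h : WeightedLE κ P Q)
    (hκ : ∀ i, 0 < κ i) (hP : ∀ i j, 0 ≤ P i j) (hQ : ∀ i j, 0 ≤ Q i j) (hP1 : P *ᵥ 1 ≤ 1)
    {L : Set ι} (hL : ∀ i j, P i j ≠ 0 → j ∈ L)
    (hgain : ∀ i ∈ L, ∃ m, (P ^ m) i i < (Q ^ m) i i) (C : ℝ) (i : ι) :
    ∀ᶠ n in atTop, C * (P ^ n *ᵥ 1) i ≤ (Q ^ n *ᵥ 1) i := by
  set B := ∑ j, κ j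
  have hκB : κ ≤ B • (1 : ι → ℝ) := fun j => by
    simpa using Finset.single_le_sum (fun l _ => (hκ l).le) (Finset.mem_univ j)
  have hB : 0 < B := Finset.sum_pos (fun j _ => hκ j) ⟨i, Finset.mem_univ i⟩
  filter_upwards [h.eventually_mul_pow_mulVec_le hκ hP hQ hP1 hL hgain (B * C) i] with n hn
  refine le_of_mul_le_mul_left ?_ hB
  calc B * (C * (P ^ n *ᵥ 1) i) = B * C * (P ^ n *ᵥ 1) i := by ring
    _ ≤ (Q ^ n *ᵥ κ) i := hn
    _ ≤ (Q ^ n *ᵥ B • (1 : ι → ℝ)) i := pow_mulVec_mono hQ n hκB i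
    _ = B * (Q ^ n *ᵥ 1) i := by rw [mulVec_smul, Pi.smul_apply, smul_eq_mul]

end Powers

end WeightedDomination

section TransitionProbabilities

variable {V : Type} [DecidableEq V] {δ δ₁ δ₂ : ℝ}

theorem gw_pos (hδ : 0 < δ) (F : Finset (Sym2 V)) (e : Sym2 V) : 0 < gw δ F e := by
  unfold gw
  split_ifs
  exacts [hδ, one_pos]

theorem gw_mono (hδ : δ₁ ≤ δ₂) (F : Finset (Sym2 V)) (e : Sym2 V) : gw δ₁ F e ≤ gw δ₂ F e := by
  unfold gw
  split_ifs
  exacts [hδ, le_rfl]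

theorem mul_gw_le_mul_gw (hδ : δ₁ ≤ δ₂) (F : Finset (Sym2 V)) (e : Sym2 V) :
    δ₁ * gw δ₂ F e ≤ δ₂ * gw δ₁ F e := by
  unfold gw
  split_ifs
  · exact (mul_comm δ₁ δ₂).le
  · simpa using hδ

variable [Fintype V] {G : SimpleGraph V} [DecidableRel G.Adj] {F : Finset (Sym2 V)} {x y z : V}

/-- The normalising constant of the transition probabilities `phat G δ F x`. -/
def totalWeight (G : SimpleGraph V) [DecidableRel G.Adj] (δ : ℝ) (F : Finset (Sym2 V))
    (x : V) : ℝ :=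
  ∑ z ∈ G.neighborFinset x, gw δ F s(x, z)

theorem phat_of_adj (hxy : G.Adj x y) :
    phat G δ F x y = gw δ F s(x, y) / totalWeight G δ F x :=
  if_pos hxy

theorem phat_of_not_adj (hxy : ¬G.Adj x y) : phat G δ F x y = 0 :=
  if_neg hxy

theorem totalWeight_pos (hδ : 0 < δ) (F : Finset (Sym2 V)) (hxy : G.Adj x y) :
    0 < totalWeight G δ F x :=
  Finset.sum_pos (fun _ _ => gw_pos hδ F _) ⟨y, (G.mem_neighborFinset x y).2 hxy⟩

theorem mul_totalWeight_le_mul_totalWeight (hδ : δ₁ ≤ δ₂) :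
    δ₁ * totalWeight G δ₂ F x ≤ δ₂ * totalWeight G δ₁ F x := by
  unfold totalWeight
  rw [Finset.mul_sum, Finset.mul_sum]
  exact Finset.sum_le_sum fun _ _ => mul_gw_le_mul_gw hδ F _

theorem mul_totalWeight_lt_mul_totalWeight (hδ : δ₁ < δ₂) (hxz : G.Adj x z)
    (hz : s(x, z) ∉ F) : δ₁ * totalWeight G δ₂ F x < δ₂ * totalWeight G δ₁ F x := by
  unfold totalWeight
  rw [Finset.mul_sum, Finset.mul_sum]
  refine Finset.sum_lt_sum (fun _ _ => mul_gw_le_mul_gw hδ.le F _)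
    ⟨z, (G.mem_neighborFinset x z).2 hxz, ?_⟩
  simpa [gw, hz] using hδ

theorem phat_pos (hδ : 0 < δ) (F : Finset (Sym2 V)) (hxy : G.Adj x y) :
    0 < phat G δ F x y := by
  rw [phat_of_adj hxy]
  exact div_pos (gw_pos hδ F _) (totalWeight_pos hδ F hxy)

theorem phat_nonneg (hδ : 0 < δ) (F : Finset (Sym2 V)) (x y : V) : 0 ≤ phat G δ F x y := by
  by_cases hxy : G.Adj x y
  · exact (phat_pos hδ F hxy).le
  · exact (phat_of_not_adj hxy).ge

theorem sum_phat_le_one (G : SimpleGraph V) [DecidableRel G.Adj] (δ : ℝ) (F : Finset (Sym2 V))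
    (x : V) : ∑ y, phat G δ F x y ≤ 1 := by
  have hsum : ∑ y, phat G δ F x y = totalWeight G δ F x / totalWeight G δ F x := by
    simp only [phat, totalWeight, Finset.sum_div, ← Finset.sum_filter,
      G.neighborFinset_eq_filter]
  exact hsum.le.trans (div_self_le_one _)

theorem phat_le_phat_of_mem (h₁ : 0 < δ₁) (hδ : δ₁ ≤ δ₂) (he : s(x, y) ∈ F) :
    phat G δ₁ F x y ≤ phat G δ₂ F x y := by
  by_cases hxy : G.Adj x y
  · rw [phat_of_adj hxy, phat_of_adj hxy, div_le_div_iff₀ (totalWeight_pos h₁ F hxy)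
      (totalWeight_pos (h₁.trans_le hδ) F hxy), gw, gw, if_pos he, if_pos he]
    exact mul_totalWeight_le_mul_totalWeight hδ
  · rw [phat_of_not_adj hxy, phat_of_not_adj hxy]

theorem phat_lt_phat_of_mem_of_notMem (h₁ : 0 < δ₁) (hδ : δ₁ < δ₂) (hxy : G.Adj x y)
    (he : s(x, y) ∈ F) (hxz : G.Adj x z) (hz : s(x, z) ∉ F) :
    phat G δ₁ F x y < phat G δ₂ F x y := by
  rw [phat_of_adj hxy, phat_of_adj hxy, div_lt_div_iff₀ (totalWeight_pos h₁ F hxy)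
    (totalWeight_pos (h₁.trans hδ) F hxy), gw, gw, if_pos he, if_pos he]
  exact mul_totalWeight_lt_mul_totalWeight hδ hxz hz

theorem phat_le_phat_mul_div (h₁ : 0 < δ₁) (hδ : δ₁ ≤ δ₂) :
    phat G δ₁ F x y ≤ phat G δ₂ F x y * (δ₂ / δ₁) := by
  by_cases hxy : G.Adj x y
  · have h₂ := h₁.trans_le hδ
    rw [phat_of_adj hxy, phat_of_adj hxy, div_mul_div_comm,
      div_le_div_iff₀ (totalWeight_pos h₁ F hxy) (mul_pos (totalWeight_pos h₂ F hxy) h₁)]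
    calc gw δ₁ F s(x, y) * (totalWeight G δ₂ F x * δ₁)
        = gw δ₁ F s(x, y) * (δ₁ * totalWeight G δ₂ F x) := by ring
      _ ≤ gw δ₂ F s(x, y) * (δ₂ * totalWeight G δ₁ F x) :=
        mul_le_mul (gw_mono hδ F _) (mul_totalWeight_le_mul_totalWeight hδ)
          (mul_pos h₁ (totalWeight_pos h₂ F hxy)).le (gw_pos h₂ F _).le
      _ = gw δ₂ F s(x, y) * δ₂ * totalWeight G δ₁ F x := by ring
  · rw [phat_of_not_adj hxy, phat_of_not_adj hxy, zero_mul]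

end TransitionProbabilities

section KilledWalk

open Matrix

variable {V : Type} [Fintype V] [DecidableEq V] {G : SimpleGraph V} [DecidableRel G.Adj]
  {δ δ₁ δ₂ : ℝ} {S0 : Set (Finset (Sym2 V))} {F : Finset (Sym2 V)} {x y : V}

/-- The transition matrix of the pair (position, traversed edges), killed at the step in which the
set of traversed edges leaves `S0`. -/
def killedKernel (G : SimpleGraph V) [DecidableRel G.Adj] (δ : ℝ) (S0 : Set (Finset (Sym2 V))) :
    Matrix (V × Finset (Sym2 V)) (V × Finset (Sym2 V)) ℝ :=
  fun p q =>
    if q.2 = insert s(p.1, q.1) p.2 ∧ q.2 ∈ S0 then phat G δ p.2 p.1 q.1 else 0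

theorem killedKernel_insert (hF : insert s(x, y) F ∈ S0) :
    killedKernel G δ S0 (x, F) (y, insert s(x, y) F) = phat G δ F x y :=
  if_pos ⟨rfl, hF⟩

theorem killedKernel_of_mem (hF : F ∈ S0) (he : s(x, y) ∈ F) :
    killedKernel G δ S0 (x, F) (y, F) = phat G δ F x y :=
  if_pos ⟨(Finset.insert_eq_of_mem he).symm, hF⟩

theorem killedKernel_nonneg (hδ : 0 < δ) (p q : V × Finset (Sym2 V)) :
    0 ≤ killedKernel G δ S0 p q := by
  unfold killedKernel
  split_ifs
  exacts [phat_nonneg hδ _ _ _, le_rfl]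

theorem killedKernel_mulVec (φ : V × Finset (Sym2 V) → ℝ) (x : V) (F : Finset (Sym2 V)) :
    (killedKernel G δ S0 *ᵥ φ) (x, F) =
      ∑ y, if insert s(x, y) F ∈ S0 then phat G δ F x y * φ (y, insert s(x, y) F) else 0 := by
  rw [mulVec, dotProduct, Fintype.sum_prod_type]
  refine Finset.sum_congr rfl fun y _ => ?_
  rw [Fintype.sum_eq_single (insert s(x, y) F)
    fun F' hF' => by rw [killedKernel, if_neg fun h => hF' h.1, zero_mul]]
  by_cases hF : insert s(x, y) F ∈ S0
  · rw [killedKernel_insert hF, if_pos hF]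
  · rw [killedKernel, if_neg fun h => hF h.2, zero_mul, if_neg hF]

theorem killedKernel_mulVec_one_le (hδ : 0 < δ) : killedKernel G δ S0 *ᵥ 1 ≤ 1 := by
  rintro ⟨x, F⟩
  rw [killedKernel_mulVec]
  refine (Finset.sum_le_sum fun y _ => ?_).trans (sum_phat_le_one G δ F x)
  split_ifs
  exacts [(mul_one _).le, phat_nonneg hδ F x y]

theorem weightedLE_killedKernel (h₁ : 0 < δ₁) (hδ : δ₁ ≤ δ₂) :
    WeightedLE (fun p => (δ₂ / δ₁) ^ p.2.card) (killedKernel G δ₁ S0) (killedKernel G δ₂ S0) := by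
  have hratio : 0 < δ₂ / δ₁ := div_pos (h₁.trans_le hδ) h₁
  rintro ⟨x, F⟩ ⟨y, F'⟩
  unfold killedKernel
  split_ifs with h
  · obtain ⟨hF' : F' = insert s(x, y) F, -⟩ := h
    subst hF'
    rw [mul_comm]
    change phat G δ₁ F x y * (δ₂ / δ₁) ^ F.card ≤
      phat G δ₂ F x y * (δ₂ / δ₁) ^ (insert s(x, y) F).card
    by_cases he : s(x, y) ∈ F
    · rw [Finset.insert_eq_of_mem he]
      exact mul_le_mul_of_nonneg_right (phat_le_phat_of_mem h₁ hδ he) (by positivity)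
    · rw [Finset.card_insert_of_notMem he, pow_succ', ← mul_assoc]
      exact mul_le_mul_of_nonneg_right (phat_le_phat_mul_div h₁ hδ) (by positivity)
  · simp

end KilledWalk

section Trajectories

open Matrix

variable {V : Type} [DecidableEq V]

theorem pathEdges_append_pair (l : List V) (x y : V) :
    pathEdges (l ++ [x, y]) = insert s(x, y) (pathEdges (l ++ [x])) := by
  induction l with
  | nil => simp [pathEdges]
  | cons a t ih =>
    cases t with
    | nil => exact Finset.insert_comm _ _ _
    | cons b t =>
      simp only [List.cons_append, pathEdges] at ih ⊢
      rw [ih, Finset.insert_comm]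

variable {n : ℕ}

theorem ofFn_snoc {α : Type*} (f : Fin n → α) (y : α) :
    List.ofFn (Fin.snoc f y : Fin (n + 1) → α) = List.ofFn f ++ [y] := by
  rw [List.ofFn_succ_last]
  simp only [Fin.snoc_castSucc, Fin.snoc_last]

theorem pathEdges_ofFn_append (f : Fin (n + 1) → V) (y : V) :
    pathEdges (List.ofFn f ++ [y]) = insert s(f (Fin.last n), y) (pathEdges (List.ofFn f)) := by
  rw [List.ofFn_succ_last, List.append_assoc]
  exact pathEdges_append_pair _ _ _

/-- The trajectory `f` has not left `S0` by time `n`, i.e. `T_{S0} > n`. -/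
def Survives (S0 : Set (Finset (Sym2 V))) (n : ℕ) (f : Fin (n + 1) → V) : Prop :=
  ∀ k, 1 ≤ k → k ≤ n → pathEdges ((List.ofFn f).take (k + 1)) ∈ S0

theorem survives_snoc_iff {S0 : Set (Finset (Sym2 V))} (f : Fin (n + 1) → V) (y : V) :
    Survives S0 (n + 1) (Fin.snoc f y : Fin (n + 2) → V) ↔
      Survives S0 n f ∧ insert s(f (Fin.last n), y) (pathEdges (List.ofFn f)) ∈ S0 := by
  have htake : ∀ k ≤ n, (List.ofFn f ++ [y]).take (k + 1) = (List.ofFn f).take (k + 1) :=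
    fun k hk => List.take_append_of_le_length (by simpa using hk)
  have hlast : (List.ofFn f ++ [y]).take (n + 1 + 1) = List.ofFn f ++ [y] :=
    List.take_of_length_le (by simp)
  unfold Survives
  rw [ofFn_snoc, ← pathEdges_ofFn_append]
  constructor
  · intro h
    exact ⟨fun k hk hkn => htake k hkn ▸ h k hk (by lia), hlast ▸ h (n + 1) (by lia) le_rfl⟩
  · rintro ⟨hinit, hend⟩ k hk hkn
    rcases Nat.le_succ_iff.1 hkn with hkn | rfl
    · exact (htake k hkn).symm ▸ hinit k hk hkn
    · exact hlast.symm ▸ hend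

variable [Fintype V] {G : SimpleGraph V} [DecidableRel G.Adj] {δ : ℝ} {v₁ : V}
  {S0 : Set (Finset (Sym2 V))}

theorem trajProb_snoc (f : Fin (n + 1) → V) (y : V) :
    trajProb G δ v₁ (n + 1) (Fin.snoc f y : Fin (n + 2) → V) =
      trajProb G δ v₁ n f * phat G δ (pathEdges (List.ofFn f)) (f (Fin.last n)) y := by
  have hzero : (Fin.snoc f y : Fin (n + 2) → V) 0 = f 0 := by simp
  have hrev : (List.ofFn f).reverse =
      f (Fin.last n) :: (List.ofFn fun i : Fin n => f i.castSucc).reverse := by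
    rw [List.ofFn_succ_last, List.reverse_append, List.reverse_singleton, List.singleton_append]
  unfold trajProb
  rw [hzero, ofFn_snoc, List.reverse_append, List.reverse_singleton, List.singleton_append, hrev,
    stepsProb, ← hrev, List.reverse_reverse, ite_zero_mul, mul_comm]

/-- `E_{v₁}[φ (X_n, edges traversed up to time n); T_{S0} > n]`. -/
def survivalExpect (G : SimpleGraph V) [DecidableRel G.Adj] (δ : ℝ) (v₁ : V)
    (S0 : Set (Finset (Sym2 V))) (n : ℕ) (φ : V × Finset (Sym2 V) → ℝ) : ℝ :=
  ∑ f : Fin (n + 1) → V,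
    if Survives S0 n f then
      trajProb G δ v₁ n f * φ (f (Fin.last n), pathEdges (List.ofFn f))
    else 0

theorem survivalExpect_one : survivalExpect G δ v₁ S0 n 1 = probTgt G δ v₁ S0 n := by
  simp [survivalExpect, probTgt, Survives]

theorem survivalExpect_zero (φ : V × Finset (Sym2 V) → ℝ) :
    survivalExpect G δ v₁ S0 0 φ = φ (v₁, ∅) := by
  have hsurv (f : Fin 1 → V) : Survives S0 0 f := fun k hk hk0 => by lia
  rw [survivalExpect, ← (Equiv.funUnique (Fin 1) V).symm.sum_comp]
  simp [hsurv, trajProb, stepsProb, pathEdges]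

theorem survivalExpect_succ (φ : V × Finset (Sym2 V) → ℝ) :
    survivalExpect G δ v₁ S0 (n + 1) φ =
      survivalExpect G δ v₁ S0 n (killedKernel G δ S0 *ᵥ φ) := by
  unfold survivalExpect
  rw [← (Fin.snocEquiv fun _ : Fin (n + 2) => V).sum_comp, Fintype.sum_prod_type_right]
  refine Finset.sum_congr rfl fun f _ => ?_
  simp only [Fin.snocEquiv, Equiv.coe_fn_mk, survives_snoc_iff, trajProb_snoc, ofFn_snoc,
    pathEdges_ofFn_append, Fin.snoc_last, ite_and]
  split_ifs with hf
  · simp only [killedKernel_mulVec, Finset.mul_sum, mul_ite_zero, mul_assoc]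
  · exact Finset.sum_const_zero

theorem probTgt_eq_killedKernel_pow_mulVec (G : SimpleGraph V) [DecidableRel G.Adj] (δ : ℝ)
    (v₁ : V) (S0 : Set (Finset (Sym2 V))) (n : ℕ) :
    probTgt G δ v₁ S0 n = (killedKernel G δ S0 ^ n *ᵥ 1) (v₁, ∅) := by
  have hpow (φ : V × Finset (Sym2 V) → ℝ) :
      survivalExpect G δ v₁ S0 n φ = (killedKernel G δ S0 ^ n *ᵥ φ) (v₁, ∅) := by
    induction n generalizing φ with
    | zero => rw [survivalExpect_zero, pow_zero, one_mulVec]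
    | succ n ih => rw [survivalExpect_succ, ih, pow_succ, mulVec_mulVec]
  rw [← survivalExpect_one, hpow]

end Trajectories

section EdgeSets

variable {V : Type} {F : Finset (Sym2 V)} {x y : V}

theorem memVerts_iff : memVerts F x ↔ ∃ y, s(x, y) ∈ F := by
  constructor
  · rintro ⟨e, he, hx⟩
    obtain ⟨y, rfl⟩ := hx
    exact ⟨y, he⟩
  · rintro ⟨y, he⟩
    exact ⟨_, he, Sym2.mem_mk_left x y⟩

theorem memVerts_right (he : s(x, y) ∈ F) : memVerts F y :=
  ⟨_, he, Sym2.mem_mk_right x y⟩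

variable [Fintype V] {G : SimpleGraph V} [DecidableRel G.Adj] {v₁ : V}
  {S0 : Set (Finset (Sym2 V))}

theorem adj_of_mem_scrS (hF : F ∈ scrS G v₁) (he : s(x, y) ∈ F) : G.Adj x y :=
  SimpleGraph.mem_edgeFinset.1 (hF.1 he)

theorem singleton_mem_scrS (hxy : G.Adj x y) : {s(x, y)} ∈ scrS G x := by
  have hreach : ∀ z, memVerts {s(x, y)} z →
      (SimpleGraph.fromEdgeSet (({s(x, y)} : Finset (Sym2 V)) : Set (Sym2 V))).Reachable x z := by
    rintro z ⟨e, he, hz⟩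
    obtain rfl := Finset.mem_singleton.1 he
    rcases Sym2.mem_iff.1 hz with rfl | rfl
    · exact SimpleGraph.Reachable.refl z
    · exact SimpleGraph.Adj.reachable (by simp [hxy.ne])
  exact ⟨by simpa using hxy, ⟨_, Finset.mem_singleton_self _, Sym2.mem_mk_left x y⟩,
    fun a b ha hb => (hreach a ha).symm.trans (hreach b hb)⟩

theorem exists_adj_notMem_of_ne_edgeFinset (hG : G.Connected) (hF : F ∈ scrS G v₁)
    (hne : F ≠ G.edgeFinset) : ∃ x z, memVerts F x ∧ G.Adj x z ∧ s(x, z) ∉ F := by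
  by_contra! hclosed
  have hall : ∀ y, memVerts F y := by
    intro y
    have hreach := hG.preconnected v₁ y
    rw [SimpleGraph.reachable_iff_reflTransGen] at hreach
    induction hreach with
    | refl => exact hF.2.1
    | tail _ hab ih => exact memVerts_right (hclosed _ _ ih hab)
  refine hne (hF.1.antisymm fun e => Sym2.ind (fun a b hab => ?_) e)
  exact hclosed a b (hall a) (SimpleGraph.mem_edgeFinset.1 hab)

theorem edgeFinset_notMem_of_ne_scrS (hsub : S0 ⊆ scrS G v₁) (hdec : DecreasingIn G v₁ S0)
    (hne : S0 ≠ scrS G v₁) : G.edgeFinset ∉ S0 := fun hE =>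
  hne (hsub.antisymm fun F hF => hdec F _ hF (hsub hE) hF.1 hE)

end EdgeSets

section SurvivingStates

open Matrix Relation

variable {V : Type} [Fintype V] [DecidableEq V] {G : SimpleGraph V} [DecidableRel G.Adj]
  {δ δ₁ δ₂ : ℝ} {v₁ : V} {S0 : Set (Finset (Sym2 V))} {F : Finset (Sym2 V)} {x y : V}

/-- The states (position, traversed edges) in which the walk can be while it survives, apart from
its starting point. -/
def survivingStates (S0 : Set (Finset (Sym2 V))) : Set (V × Finset (Sym2 V)) :=
  {p | p.2 ∈ S0 ∧ memVerts p.2 p.1}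

theorem mem_survivingStates_of_killedKernel_ne_zero {p q : V × Finset (Sym2 V)}
    (hpq : killedKernel G δ S0 p q ≠ 0) : q ∈ survivingStates S0 := by
  obtain ⟨hq, hS0⟩ := of_not_not fun h => hpq (if_neg h)
  exact ⟨hS0, memVerts_right (hq ▸ Finset.mem_insert_self _ _)⟩

theorem killedKernel_pos_of_mem (hδ : 0 < δ) (hsub : S0 ⊆ scrS G v₁) (hF : F ∈ S0)
    (he : s(x, y) ∈ F) : 0 < killedKernel G δ S0 (x, F) (y, F) := by
  rw [killedKernel_of_mem hF he]
  exact phat_pos hδ F (adj_of_mem_scrS (hsub hF) he)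

theorem exists_killedKernel_pos (hδ : 0 < δ) (hsub : S0 ⊆ scrS G v₁)
    {p : V × Finset (Sym2 V)} (hp : p ∈ survivingStates S0) :
    ∃ q ∈ survivingStates S0, 0 < killedKernel G δ S0 p q := by
  obtain ⟨hF, hx⟩ := hp
  obtain ⟨y, he⟩ := memVerts_iff.1 hx
  exact ⟨(y, p.2), ⟨hF, memVerts_right he⟩, killedKernel_pos_of_mem hδ hsub hF he⟩

theorem exists_killedKernel_pos_start (hδ : 0 < δ) (hne : S0.Nonempty)
    (hsub : S0 ⊆ scrS G v₁) (hdec : DecreasingIn G v₁ S0) :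
    ∃ q ∈ survivingStates S0, 0 < killedKernel G δ S0 (v₁, ∅) q := by
  obtain ⟨F, hF⟩ := hne
  obtain ⟨y, he⟩ := memVerts_iff.1 (hsub hF).2.1
  have hadj : G.Adj v₁ y := adj_of_mem_scrS (hsub hF) he
  have hS0 : insert s(v₁, y) ∅ ∈ S0 :=
    hdec _ F (singleton_mem_scrS hadj) (hsub hF) (Finset.singleton_subset_iff.2 he) hF
  refine ⟨(y, _), ⟨hS0, memVerts_right (Finset.mem_insert_self _ _)⟩, ?_⟩
  rw [killedKernel_insert hS0]
  exact phat_pos hδ ∅ hadj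

theorem probTgt_pos (hδ : 0 < δ) (hne : S0.Nonempty) (hsub : S0 ⊆ scrS G v₁)
    (hdec : DecreasingIn G v₁ S0) (n : ℕ) : 0 < probTgt G δ v₁ S0 n := by
  rw [probTgt_eq_killedKernel_pow_mulVec]
  refine pow_mulVec_one_pos (killedKernel_nonneg hδ) (L := insert (v₁, ∅) (survivingStates S0))
    ?_ n _ (Set.mem_insert _ _)
  rintro p (rfl | hp)
  · obtain ⟨q, hq, hpos⟩ := exists_killedKernel_pos_start hδ hne hsub hdec
    exact ⟨q, Or.inr hq, hpos⟩
  · obtain ⟨q, hq, hpos⟩ := exists_killedKernel_pos hδ hsub hp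
    exact ⟨q, Or.inr hq, hpos⟩

theorem reflTransGen_killedKernel_pos (hδ : 0 < δ) (hsub : S0 ⊆ scrS G v₁) (hF : F ∈ S0)
    (hx : memVerts F x) (hy : memVerts F y) :
    ReflTransGen (fun p q => 0 < killedKernel G δ S0 p q) (x, F) (y, F) := by
  have hreach := (hsub hF).2.2 x y hx hy
  rw [SimpleGraph.reachable_iff_reflTransGen] at hreach
  refine hreach.lift (fun a => (a, F)) fun a b hab => ?_
  rw [SimpleGraph.fromEdgeSet_adj, Finset.mem_coe] at hab
  exact killedKernel_pos_of_mem hδ hsub hF hab.1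

theorem exists_killedKernel_pow_self_lt (hG : G.Connected) (h₁ : 0 < δ₁) (hδ : δ₁ < δ₂)
    (hsub : S0 ⊆ scrS G v₁) (hE : G.edgeFinset ∉ S0) {p : V × Finset (Sym2 V)}
    (hp : p ∈ survivingStates S0) :
    ∃ m, (killedKernel G δ₁ S0 ^ m) p p < (killedKernel G δ₂ S0 ^ m) p p := by
  obtain ⟨x, F⟩ := p
  obtain ⟨hF : F ∈ S0, hx : memVerts F x⟩ := hp
  have hκ (q : V × Finset (Sym2 V)) : 0 < (δ₂ / δ₁) ^ q.2.card :=
    pow_pos (div_pos (h₁.trans hδ) h₁) _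
  obtain ⟨a, z, ha, haz, hz⟩ :=
    exists_adj_notMem_of_ne_edgeFinset hG (hsub hF) (ne_of_mem_of_not_mem hF hE)
  obtain ⟨b, he⟩ := memVerts_iff.1 ha
  have hstep : (δ₂ / δ₁) ^ F.card * killedKernel G δ₁ S0 (a, F) (b, F) <
      killedKernel G δ₂ S0 (a, F) (b, F) * (δ₂ / δ₁) ^ F.card := by
    rw [mul_comm, killedKernel_of_mem hF he, killedKernel_of_mem hF he]
    exact mul_lt_mul_of_pos_right
      (phat_lt_phat_of_mem_of_notMem h₁ hδ (adj_of_mem_scrS (hsub hF) he) he haz hz) (hκ (x, F))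
  obtain ⟨m, hm⟩ := (weightedLE_killedKernel h₁ hδ.le).exists_pow_lt_of_reflTransGen hκ
    (killedKernel_nonneg h₁) (killedKernel_nonneg (h₁.trans hδ))
    (reflTransGen_killedKernel_pos h₁ hsub hF hx ha) hstep
    (reflTransGen_killedKernel_pos h₁ hsub hF (memVerts_right he) hx)
  rw [mul_comm] at hm
  exact ⟨m, lt_of_mul_lt_mul_right hm (hκ (x, F)).le⟩

theorem eventually_mul_probTgt_le (hG : G.Connected) (h₁ : 0 < δ₁) (hδ : δ₁ < δ₂)
    (hsub : S0 ⊆ scrS G v₁) (hE : G.edgeFinset ∉ S0) (C : ℝ) :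
    ∀ᶠ n in atTop, C * probTgt G δ₁ v₁ S0 n ≤ probTgt G δ₂ v₁ S0 n := by
  have h₂ : 0 < δ₂ := h₁.trans hδ
  simp only [probTgt_eq_killedKernel_pow_mulVec]
  exact (weightedLE_killedKernel h₁ hδ.le).eventually_mul_pow_mulVec_one_le
    (fun _ => pow_pos (div_pos h₂ h₁) _) (killedKernel_nonneg h₁) (killedKernel_nonneg h₂)
    (killedKernel_mulVec_one_le h₁) (fun _ _ => mem_survivingStates_of_killedKernel_ne_zero)
    (fun _ => exists_killedKernel_pow_self_lt hG h₁ hδ hsub hE) C (v₁, ∅)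

end SurvivingStates

/-- Comparison of the tail probabilities of `T_{𝒮₀}` for two
reinforcement parameters `δ₁ < δ₂`. -/
theorem orrw_tail_comparison {V : Type} [Fintype V] [DecidableEq V]
    (G : SimpleGraph V) [DecidableRel G.Adj] (hG : G.Connected)
    (hV : 3 ≤ Fintype.card V) (v₁ : V) (δ₁ δ₂ : ℝ) (h1 : 0 < δ₁) (h12 : δ₁ < δ₂)
    (S0 : Set (Finset (Sym2 V))) (hS0ne : S0.Nonempty) (hS0sub : S0 ⊆ scrS G v₁)
    (hS0dec : DecreasingIn G v₁ S0) (hS0ne' : S0 ≠ scrS G v₁) :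
    ∃ N : ℕ, ∀ n : ℕ, N < n → probTgt G δ₁ v₁ S0 n < probTgt G δ₂ v₁ S0 n := by
  have hE : G.edgeFinset ∉ S0 := edgeFinset_notMem_of_ne_scrS hS0sub hS0dec hS0ne'
  obtain ⟨N, hN⟩ := eventually_atTop.1 (eventually_mul_probTgt_le hG h1 h12 hS0sub hE 2)
  refine ⟨N, fun n hn => ?_⟩
  have hpos : 0 < probTgt G δ₁ v₁ S0 n := probTgt_pos h1 hS0ne hS0sub hS0dec n
  linarith [hN n hn.le]

end ORRW
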